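/- For every integer n ≥ 1, the rank generating function of the order ideals of the three-color tetrahedral poset T_n({g,y,o}) satisfies F(J(T_n({g,y,o})),q) = ∏_{j=1}^{n−1} (1+q^j)^{n−j}, as polynomials in ℤ[q]; in particular the number of order ideals is 2^{binomial(n,2)}. -/

import Mathlib

open scoped Classical

noncomputable section

/-- `V3 n` is the set `{(a,b,c) ∈ ℤ≥0³ : a + b + c ≤ n - 2}`. -/
def V3 (n : ℕ) : Finset (ℤ × ℤ × ℤ) :=
  ((Finset.Icc (0:ℤ) (n:ℤ) ×ˢ Finset.Icc (0:ℤ) (n:ℤ) ×ˢ Finset.Icc (0:ℤ) (n:ℤ)).filter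
    (fun p => p.1 + p.2.1 + p.2.2 ≤ (n:ℤ) - 2))

/-- The six edge vectors. -/
def vr : ℤ × ℤ × ℤ := (1,0,0)
def vg : ℤ × ℤ × ℤ := (0,1,0)
def vy : ℤ × ℤ × ℤ := (0,0,1)
def vb : ℤ × ℤ × ℤ := (-1,1,0)
def vo : ℤ × ℤ × ℤ := (-1,0,1)
def vs : ℤ × ℤ × ℤ := (0,1,-1)

/-- One step: add a vector of `S`, staying inside `W`. -/
def step3 (S : Set (ℤ × ℤ × ℤ)) (W : Finset (ℤ × ℤ × ℤ)) (u v : ℤ × ℤ × ℤ) : Prop :=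
  u ∈ W ∧ v ∈ W ∧ ∃ e ∈ S, v = u + e

/-- The order relation of `T_n(S)`: reflexive-transitive closure of `step3`,
restricted to `W`. -/
def le3 (S : Set (ℤ × ℤ × ℤ)) (W : Finset (ℤ × ℤ × ℤ)) (u v : ℤ × ℤ × ℤ) : Prop :=
  u ∈ W ∧ v ∈ W ∧ Relation.ReflTransGen (step3 S W) u v

/-- An order ideal: a downward closed subset of `W`. -/
def IsIdeal3 (S : Set (ℤ × ℤ × ℤ)) (W : Finset (ℤ × ℤ × ℤ))
    (I : Finset (ℤ × ℤ × ℤ)) : Prop :=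
  I ⊆ W ∧ ∀ u v : ℤ × ℤ × ℤ, le3 S W u v → v ∈ I → u ∈ I

/-- The set of all order ideals of `T_n(S)`. -/
def ideals3 (S : Set (ℤ × ℤ × ℤ)) (W : Finset (ℤ × ℤ × ℤ)) :
    Finset (Finset (ℤ × ℤ × ℤ)) :=
  W.powerset.filter (fun I => IsIdeal3 S W I)

/-- The rank generating function `F(J(T_n(S)),q) = Σ_{I} q^{|I|}`. -/
def genF3 (S : Set (ℤ × ℤ × ℤ)) (W : Finset (ℤ × ℤ × ℤ)) : Polynomial ℤ :=
  ∑ I ∈ ideals3 S W, Polynomial.X ^ I.card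

end

/-- Sets of lattice points with `a + b < s` that become order ideals when completed by columns of
heights `h` over the slice `a + b = s`. -/
structure IsSliceIdeal (s : ℕ) (h : Fin (s + 1) → ℕ) (I : Finset (ℤ × ℤ × ℤ)) : Prop where
  lt : ∀ a b c : ℤ, (a, b, c) ∈ I → a + b < s
  down_y : ∀ a b c, 0 ≤ c → (a, b, c + 1) ∈ I → (a, b, c) ∈ I
  down_g : ∀ a b c, 0 ≤ b → (a, b + 1, c) ∈ I → (a, b, c) ∈ I
  down_o : ∀ a b c : ℤ, 0 ≤ c → a + b + 1 < s → (a, b, c + 1) ∈ I → (a + 1, b, c) ∈ I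
  lower : ∀ (i : Fin s) (c : ℤ), 0 ≤ c → c < h i.succ → ((s : ℤ) - 1 - i, (i : ℤ), c) ∈ I
  upper : ∀ (i : Fin s) (c : ℤ), 0 ≤ c → ((s : ℤ) - 1 - i, (i : ℤ), c + 1) ∈ I →
    c < h i.castSucc

/-- The slice ideals contained in `V3 n`. -/
noncomputable def sliceIdeals (n s : ℕ) (h : Fin (s + 1) → ℕ) : Finset (Finset (ℤ × ℤ × ℤ)) :=
  (V3 n).powerset.filter (IsSliceIdeal s h)

theorem mem_V3 {n : ℕ} {a b c : ℤ} :
    (a, b, c) ∈ V3 n ↔ 0 ≤ a ∧ 0 ≤ b ∧ 0 ≤ c ∧ a + b + c ≤ (n : ℤ) - 2 := by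
  simp only [V3, Finset.mem_filter, Finset.mem_product, Finset.mem_Icc]
  omega

theorem mem_sliceIdeals {n s : ℕ} {h : Fin (s + 1) → ℕ} {I : Finset (ℤ × ℤ × ℤ)} :
    I ∈ sliceIdeals n s h ↔ I ⊆ V3 n ∧ IsSliceIdeal s h I := by
  simp [sliceIdeals]

/-- A finite down-closed set of nonnegative integers is an initial segment. -/
theorem mem_iff_lt_card_of_down_closed {S : Finset ℤ} (h0 : ∀ c ∈ S, 0 ≤ c)
    (hd : ∀ c, 0 ≤ c → c + 1 ∈ S → c ∈ S) (c : ℤ) : c ∈ S ↔ 0 ≤ c ∧ c < S.card := by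
  have hex : ∃ k : ℕ, (k : ℤ) ∉ S := by
    by_contra! hcon
    exact Set.infinite_of_injective_forall_mem (f := fun k : ℕ => (k : ℤ))
      Nat.cast_injective hcon S.finite_toSet
  have hdn : ∀ d j : ℕ, ((j + d : ℕ) : ℤ) ∈ S → (j : ℤ) ∈ S := by
    intro d
    induction d with
    | zero => intro j hj; simpa using hj
    | succ d ih =>
      intro j hj
      refine ih j (hd _ (by positivity) ?_)
      push_cast at hj ⊢
      rwa [add_assoc]
  have hS : S = Finset.Ico 0 (Nat.find hex : ℤ) := by
    ext x
    rw [Finset.mem_Ico]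
    constructor
    · intro hx
      refine ⟨h0 x hx, ?_⟩
      by_contra! hlt
      refine Nat.find_spec hex (hdn (x.toNat - Nat.find hex) _ ?_)
      have : ((Nat.find hex + (x.toNat - Nat.find hex) : ℕ) : ℤ) = x := by omega
      rwa [this]
    · rintro ⟨hx0, hx⟩
      have := Nat.find_min hex (m := x.toNat) (by omega)
      rwa [not_not, Int.toNat_of_nonneg hx0] at this
  have hc : S.card = Nat.find hex := by
    conv_lhs => rw [hS]
    simp
  rw [hc]
  conv_lhs => rw [hS]
  exact Finset.mem_Ico

/-- The number of points of `I` on the vertical line through `(a, b)`. -/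
noncomputable def columnHeight (I : Finset (ℤ × ℤ × ℤ)) (a b : ℤ) : ℕ :=
  ((I.filter fun p => p.1 = a ∧ p.2.1 = b).image fun p => p.2.2).card

theorem mem_iff_lt_columnHeight {n s : ℕ} {h : Fin (s + 1) → ℕ} {I : Finset (ℤ × ℤ × ℤ)}
    (hI : I ∈ sliceIdeals n s h) (a b c : ℤ) :
    (a, b, c) ∈ I ↔ 0 ≤ c ∧ c < columnHeight I a b := by
  rw [mem_sliceIdeals] at hI
  have hmem : ∀ c, c ∈ ((I.filter fun p => p.1 = a ∧ p.2.1 = b).image fun p => p.2.2) ↔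
      (a, b, c) ∈ I := by
    intro c
    simp only [Finset.mem_image, Finset.mem_filter, Prod.exists]
    constructor
    · rintro ⟨a', b', c', ⟨h1, rfl, rfl⟩, rfl⟩
      exact h1
    · intro h1
      exact ⟨a, b, c, ⟨h1, rfl, rfl⟩, rfl⟩
  rw [← hmem, columnHeight]
  apply mem_iff_lt_card_of_down_closed
  · intro c hc
    exact (mem_V3.1 (hI.1 ((hmem c).1 hc))).2.2.1
  · intro c hc hc'
    rw [hmem] at hc' ⊢
    exact hI.2.down_y a b c hc hc'

/-- The heights of the columns of `I` over the slice `a + b = s`. -/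
noncomputable def topHeights (s : ℕ) (I : Finset (ℤ × ℤ × ℤ)) (i : Fin (s + 1)) : ℕ :=
  columnHeight I ((s : ℤ) - i) i

/-- The union of the columns of heights `m` over the slice `a + b = s`. -/
noncomputable def columns (s : ℕ) (m : Fin (s + 1) → ℕ) : Finset (ℤ × ℤ × ℤ) :=
  (Finset.univ.sigma fun i : Fin (s + 1) => Finset.range (m i)).image
    fun x => ((s : ℤ) - x.1, (x.1 : ℤ), (x.2 : ℤ))

theorem mem_columns {s : ℕ} {m : Fin (s + 1) → ℕ} {a b c : ℤ} :
    (a, b, c) ∈ columns s m ↔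
      ∃ i : Fin (s + 1), a = (s : ℤ) - i ∧ b = i ∧ 0 ≤ c ∧ c < m i := by
  simp only [columns, Finset.mem_image, Finset.mem_sigma, Finset.mem_univ, true_and,
    Finset.mem_range, Sigma.exists, Prod.mk.injEq]
  constructor
  · rintro ⟨i, k, hk, rfl, rfl, rfl⟩
    exact ⟨i, rfl, rfl, by omega, by omega⟩
  · rintro ⟨i, rfl, rfl, h0, h1⟩
    exact ⟨i, c.toNat, by omega, rfl, rfl, by omega⟩

theorem mk_mem_columns {s : ℕ} {m : Fin (s + 1) → ℕ} {i : Fin (s + 1)} {c : ℤ} :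
    ((s : ℤ) - i, (i : ℤ), c) ∈ columns s m ↔ 0 ≤ c ∧ c < m i := by
  rw [mem_columns]
  constructor
  · rintro ⟨j, -, hj, h⟩
    have : i = j := by ext; exact_mod_cast hj
    rwa [this]
  · intro h
    exact ⟨i, rfl, rfl, h⟩

theorem card_columns (s : ℕ) (m : Fin (s + 1) → ℕ) : (columns s m).card = ∑ i, m i := by
  rw [columns, Finset.card_image_of_injective, Finset.card_sigma]
  · simp
  · rintro ⟨i, k⟩ ⟨j, l⟩ h
    simp only [Prod.mk.injEq, Nat.cast_inj] at h
    obtain ⟨-, h1, rfl⟩ := h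
    obtain rfl : i = j := Fin.ext h1
    rfl

theorem topHeights_mem {n s : ℕ} {h : Fin (s + 2) → ℕ} {I : Finset (ℤ × ℤ × ℤ)}
    (hI : I ∈ sliceIdeals n (s + 1) h) :
    topHeights s I ∈
      Fintype.piFinset fun i : Fin (s + 1) => Finset.Icc (h i.succ) (h i.castSucc + 1) := by
  have hmem := mem_iff_lt_columnHeight hI
  have hI2 := (mem_sliceIdeals.1 hI).2
  rw [Fintype.mem_piFinset]
  intro i
  rw [Finset.mem_Icc]
  have hs : ((s + 1 : ℕ) : ℤ) - 1 - i = s - i := by push_cast; ring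
  constructor
  · by_contra! hlt
    have h1 := hI2.lower i (topHeights s I i) (by positivity) (by exact_mod_cast hlt)
    rw [hs, hmem] at h1
    exact lt_irrefl _ h1.2
  · by_contra! hlt
    have h1 := hI2.upper i (h i.castSucc) (by positivity)
      (by rw [hs, hmem]; exact ⟨by positivity, by unfold topHeights at hlt; omega⟩)
    exact lt_irrefl _ h1

theorem filter_mem_sliceIdeals {n s : ℕ} {h : Fin (s + 2) → ℕ} {I : Finset (ℤ × ℤ × ℤ)}
    (hI : I ∈ sliceIdeals n (s + 1) h) :
    I.filter (fun p => p.1 + p.2.1 < (s : ℤ)) ∈ sliceIdeals n s (topHeights s I) := by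
  have hmem := mem_iff_lt_columnHeight hI
  obtain ⟨hV, hI2⟩ := mem_sliceIdeals.1 hI
  rw [mem_sliceIdeals]
  refine ⟨(Finset.filter_subset _ _).trans hV, ?_, ?_, ?_, ?_, ?_, ?_⟩
  · intro a b c hp
    exact (Finset.mem_filter.1 hp).2
  · intro a b c hc hp
    rw [Finset.mem_filter] at hp ⊢
    exact ⟨hI2.down_y a b c hc hp.1, hp.2⟩
  · intro a b c hb hp
    rw [Finset.mem_filter] at hp ⊢
    exact ⟨hI2.down_g a b c hb hp.1, by have := hp.2; dsimp only at this ⊢; omega⟩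
  · intro a b c hc hs hp
    rw [Finset.mem_filter] at hp ⊢
    exact ⟨hI2.down_o a b c hc (by push_cast; omega) hp.1, by dsimp only; omega⟩
  · intro i c hc hlt
    rw [Finset.mem_filter]
    refine ⟨hI2.down_g _ _ _ (by positivity) ?_, by dsimp only; omega⟩
    have h1 := (hmem ((s : ℤ) - i.succ) i.succ c).2 ⟨hc, hlt⟩
    have e1 : (s : ℤ) - 1 - i = s - (i.succ : ℕ) := by rw [Fin.val_succ]; push_cast; ring
    have e2 : (i : ℤ) + 1 = (i.succ : ℕ) := by rw [Fin.val_succ]; push_cast; ring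
    rwa [e1, e2]
  · intro i c hc hp
    rw [Finset.mem_filter] at hp
    have h1 := hI2.down_o _ _ c hc (by push_cast; omega) hp.1
    have e1 : (s : ℤ) - 1 - i + 1 = s - i := by ring
    rw [e1, hmem] at h1
    exact h1.2

theorem union_columns_mem_sliceIdeals {n s : ℕ} {h : Fin (s + 2) → ℕ} {m : Fin (s + 1) → ℕ}
    {J : Finset (ℤ × ℤ × ℤ)} (hn : ∀ i, h i + (s + 1) + 1 ≤ n)
    (hm : ∀ i : Fin (s + 1), h i.succ ≤ m i ∧ m i ≤ h i.castSucc + 1)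
    (hJ : J ∈ sliceIdeals n s m) : J ∪ columns s m ∈ sliceIdeals n (s + 1) h := by
  obtain ⟨hV, hJ2⟩ := mem_sliceIdeals.1 hJ
  rw [mem_sliceIdeals]
  have hs (i : ℕ) : ((s + 1 : ℕ) : ℤ) - 1 - i = s - i := by push_cast; ring
  refine ⟨?_, ?_, ?_, ?_, ?_, ?_, ?_⟩
  · refine Finset.union_subset hV ?_
    rintro ⟨a, b, c⟩ hp
    obtain ⟨i, rfl, rfl, h0, h1⟩ := mem_columns.1 hp
    rw [mem_V3]
    have := hm i
    have := hn i.castSucc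
    have := i.2
    omega
  · intro a b c hp
    rcases Finset.mem_union.1 hp with hp | hp
    · have := hJ2.lt a b c hp
      omega
    · obtain ⟨i, rfl, rfl, h0, h1⟩ := mem_columns.1 hp
      omega
  · intro a b c hc hp
    rw [Finset.mem_union] at hp ⊢
    rcases hp with hp | hp
    · exact Or.inl (hJ2.down_y a b c hc hp)
    · obtain ⟨i, ha, hb, h0, h1⟩ := mem_columns.1 hp
      exact Or.inr (mem_columns.2 ⟨i, ha, hb, hc, by omega⟩)
  · intro a b c hb hp
    rw [Finset.mem_union] at hp ⊢
    rcases hp with hp | hp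
    · exact Or.inl (hJ2.down_g a b c hb hp)
    · obtain ⟨i, ha, hb', h0, h1⟩ := mem_columns.1 hp
      obtain ⟨j, rfl⟩ := Fin.exists_succ_eq.2 (show i ≠ 0 by rintro rfl; simp at hb'; omega)
      rw [Fin.val_succ] at ha hb'
      have h2 := hJ2.lower j c h0 h1
      have e1 : a = (s : ℤ) - 1 - j := by push_cast at ha; omega
      have e2 : b = j := by push_cast at hb'; omega
      rw [e1, e2]
      exact Or.inl h2
  · intro a b c hc hab hp
    rw [Finset.mem_union] at hp ⊢
    rcases hp with hp | hp
    · rcases lt_or_ge (a + b + 1) (s : ℤ) with hlt | hge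
      · exact Or.inl (hJ2.down_o a b c hc hlt hp)
      · have hv := mem_V3.1 (hV hp)
        push_cast at hab
        obtain ⟨j, hj⟩ : ∃ j : Fin s, b = j := ⟨⟨b.toNat, by omega⟩, by simp; omega⟩
        have e1 : a = (s : ℤ) - 1 - j := by omega
        rw [e1, hj] at hp
        have h2 := hJ2.upper j c hc hp
        exact Or.inr (mem_columns.2 ⟨j.castSucc, by simp; omega, by simp; omega, hc, h2⟩)
    · obtain ⟨i, rfl, rfl, h0, h1⟩ := mem_columns.1 hp
      push_cast at hab
      omega
  · intro i c hc hlt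
    rw [Finset.mem_union, hs, mk_mem_columns]
    have := hm i
    exact Or.inr ⟨hc, by omega⟩
  · intro i c hc hp
    rw [Finset.mem_union, hs, mk_mem_columns] at hp
    have := hm i
    rcases hp with hp | hp
    · have := hJ2.lt _ _ _ hp
      omega
    · omega

theorem disjoint_columns {n s : ℕ} {m : Fin (s + 1) → ℕ} {J : Finset (ℤ × ℤ × ℤ)}
    (hJ : J ∈ sliceIdeals n s m) : Disjoint J (columns s m) := by
  rw [Finset.disjoint_left]
  rintro ⟨a, b, c⟩ hp hq
  have := (mem_sliceIdeals.1 hJ).2.lt a b c hp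
  obtain ⟨i, rfl, rfl, -⟩ := mem_columns.1 hq
  omega

theorem filter_union_columns {n s : ℕ} {h : Fin (s + 2) → ℕ} {I : Finset (ℤ × ℤ × ℤ)}
    (hI : I ∈ sliceIdeals n (s + 1) h) :
    I.filter (fun p => p.1 + p.2.1 < (s : ℤ)) ∪ columns s (topHeights s I) = I := by
  have hmem := mem_iff_lt_columnHeight hI
  obtain ⟨hV, hI2⟩ := mem_sliceIdeals.1 hI
  ext ⟨a, b, c⟩
  rw [Finset.mem_union, Finset.mem_filter]
  constructor
  · rintro (hp | hp)
    · exact hp.1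
    · obtain ⟨i, rfl, rfl, h0⟩ := mem_columns.1 hp
      exact (hmem _ _ _).2 h0
  · intro hp
    rcases lt_or_ge (a + b) (s : ℤ) with hlt | hge
    · exact Or.inl ⟨hp, hlt⟩
    · right
      have hv := mem_V3.1 (hV hp)
      have hl := hI2.lt a b c hp
      push_cast at hl
      obtain ⟨i, hi⟩ : ∃ i : Fin (s + 1), b = i := ⟨⟨b.toNat, by omega⟩, by simp; omega⟩
      have e1 : a = (s : ℤ) - i := by omega
      rw [e1, hi] at hp ⊢
      exact mk_mem_columns.2 ((hmem _ _ _).1 hp)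

theorem topHeights_union_columns {n s : ℕ} {h : Fin (s + 2) → ℕ} {m : Fin (s + 1) → ℕ}
    {J : Finset (ℤ × ℤ × ℤ)} (hJ : J ∈ sliceIdeals n s m)
    (hI : J ∪ columns s m ∈ sliceIdeals n (s + 1) h) :
    topHeights s (J ∪ columns s m) = m := by
  funext i
  have hmem : ∀ c : ℤ, 0 ≤ c → (c < topHeights s (J ∪ columns s m) i ↔ c < m i) := by
    intro c hc
    have h1 := mem_iff_lt_columnHeight hI ((s : ℤ) - i) i c
    rw [Finset.mem_union, mk_mem_columns] at h1
    have h2 : ((s : ℤ) - i, (i : ℤ), c) ∉ J := by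
      intro hp
      have := (mem_sliceIdeals.1 hJ).2.lt _ _ _ hp
      omega
    simp only [h2, false_or, hc, true_and] at h1
    exact h1.symm
  have h1 := hmem (m i) (by positivity)
  have h2 := hmem (topHeights s (J ∪ columns s m) i) (by positivity)
  omega

/-- Decomposition of the generating function of slice ideals by the heights of the top slice. -/
theorem sum_sliceIdeals_succ {K : Type*} [CommSemiring K] (q : K) {n s : ℕ}
    {h : Fin (s + 2) → ℕ} (hn : ∀ i, h i + (s + 1) + 1 ≤ n) :
    ∑ I ∈ sliceIdeals n (s + 1) h, q ^ I.card =
      ∑ m ∈ Fintype.piFinset fun i : Fin (s + 1) => Finset.Icc (h i.succ) (h i.castSucc + 1),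
        q ^ (∑ i, m i) * ∑ J ∈ sliceIdeals n s m, q ^ J.card := by
  rw [← Finset.sum_fiberwise_of_maps_to (g := topHeights s) (fun I hI => topHeights_mem hI)]
  refine Finset.sum_congr rfl fun m hm => ?_
  rw [Finset.mul_sum]
  simp only [Fintype.mem_piFinset, Finset.mem_Icc] at hm
  refine Finset.sum_bij' (fun I _ => I.filter fun p => p.1 + p.2.1 < (s : ℤ))
    (fun J _ => J ∪ columns s m) ?_ ?_ ?_ ?_ ?_
  · intro I hI
    obtain ⟨hI, hIm⟩ := Finset.mem_filter.1 hI
    have hJ := filter_mem_sliceIdeals hI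
    rwa [hIm] at hJ
  · intro J hJ
    have hI := union_columns_mem_sliceIdeals hn hm hJ
    exact Finset.mem_filter.2 ⟨hI, topHeights_union_columns hJ hI⟩
  · intro I hI
    obtain ⟨hI, hIm⟩ := Finset.mem_filter.1 hI
    have hU := filter_union_columns hI
    rwa [hIm] at hU
  · intro J hJ
    ext ⟨a, b, c⟩
    rw [Finset.mem_filter, Finset.mem_union]
    constructor
    · rintro ⟨hp | hp, hlt⟩
      · exact hp
      · obtain ⟨i, rfl, rfl, -⟩ := mem_columns.1 hp
        dsimp only at hlt
        omega
    · intro hp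
      exact ⟨Or.inl hp, (mem_sliceIdeals.1 hJ).2.lt a b c hp⟩
  · intro I hI
    obtain ⟨hI, hIm⟩ := Finset.mem_filter.1 hI
    have hc := Finset.card_union_of_disjoint (disjoint_columns (filter_mem_sliceIdeals hI))
    rw [filter_union_columns hI, card_columns, hIm] at hc
    rw [hc, pow_add, mul_comm]

theorem sliceIdeals_zero (n : ℕ) (h : Fin 1 → ℕ) : sliceIdeals n 0 h = {∅} := by
  ext I
  rw [mem_sliceIdeals, Finset.mem_singleton]
  constructor
  · rintro ⟨hV, hI⟩
    rw [Finset.eq_empty_iff_forall_notMem]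
    rintro ⟨a, b, c⟩ hp
    have := hI.lt a b c hp
    have := mem_V3.1 (hV hp)
    push_cast at *
    omega
  · rintro rfl
    exact ⟨Finset.empty_subset _, by simp, by simp, by simp, by simp,
      fun i => i.elim0, fun i => i.elim0⟩

/-- A subset is an order ideal as soon as it is closed under single downward steps. -/
theorem isIdeal3_iff {S : Set (ℤ × ℤ × ℤ)} {W I : Finset (ℤ × ℤ × ℤ)} :
    IsIdeal3 S W I ↔ I ⊆ W ∧ ∀ u v, step3 S W u v → v ∈ I → u ∈ I := by
  refine and_congr_right fun _ => ⟨fun h u v huv => h u v ⟨huv.1, huv.2.1, .single huv⟩, ?_⟩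
  rintro h u v ⟨-, -, huv⟩ hv
  induction huv using Relation.ReflTransGen.head_induction_on with
  | refl => exact hv
  | head h1 _ ih => exact h _ _ h1 ih

theorem ideals3_eq_sliceIdeals (N : ℕ) :
    ideals3 {vg, vy, vo} (V3 (N + 1)) = sliceIdeals (N + 1) N fun _ => 0 := by
  ext I
  rw [mem_sliceIdeals, ideals3, Finset.mem_filter, Finset.mem_powerset, isIdeal3_iff]
  refine and_congr_right fun hV => ?_
  have hv : ∀ a b c, (a, b, c) ∈ I → 0 ≤ a ∧ 0 ≤ b ∧ 0 ≤ c ∧ a + b + c ≤ (N : ℤ) - 1 := by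
    intro a b c hp
    have := mem_V3.1 (hV hp)
    push_cast at this
    omega
  constructor
  · rintro ⟨-, h⟩
    have hstep : ∀ a b c a' b' c', (a', b', c') ∈ I → 0 ≤ a → 0 ≤ b → 0 ≤ c →
        a + b + c ≤ (N : ℤ) - 1 →
        (∃ e ∈ ({vg, vy, vo} : Set (ℤ × ℤ × ℤ)), (a', b', c') = (a, b, c) + e) →
        (a, b, c) ∈ I := by
      intro a b c a' b' c' hp h1 h2 h3 h4 he
      exact h _ _ ⟨mem_V3.2 ⟨h1, h2, h3, by push_cast; omega⟩, hV hp, he⟩ hp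
    refine ⟨?_, ?_, ?_, ?_, ?_, ?_⟩
    · intro a b c hp
      have := hv a b c hp
      omega
    · intro a b c hc hp
      have := hv _ _ _ hp
      exact hstep _ _ _ _ _ _ hp (by omega) (by omega) (by omega) (by omega)
        ⟨vy, by simp, by simp [vy]⟩
    · intro a b c hc hp
      have := hv _ _ _ hp
      exact hstep _ _ _ _ _ _ hp (by omega) (by omega) (by omega) (by omega)
        ⟨vg, by simp, by simp [vg]⟩
    · intro a b c hc hs hp
      have := hv _ _ _ hp
      exact hstep _ _ _ _ _ _ hp (by omega) (by omega) (by omega) (by omega)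
        ⟨vo, by simp, by simp [vo]⟩
    · intro i c h0 h1
      simp only [Nat.cast_zero] at h1
      omega
    · intro i c h0 hp
      have := hv _ _ _ hp
      omega
  · rintro hI
    refine ⟨hV, ?_⟩
    rintro ⟨a, b, c⟩ v ⟨hu, -, e, he, rfl⟩ hp
    rw [mem_V3] at hu
    simp only [Set.mem_insert_iff, Set.mem_singleton_iff] at he
    rcases he with rfl | rfl | rfl
    · simp only [vg, Prod.mk_add_mk, add_zero] at hp
      exact hI.down_g a b c hu.2.1 hp
    · simp only [vy, Prod.mk_add_mk, add_zero] at hp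
      exact hI.down_y a b c hu.2.2.1 hp
    · simp only [vo, Prod.mk_add_mk, add_zero] at hp
      have h1 := hI.down_o (a + -1) b c hu.2.2.1 (by have := hv _ _ _ hp; omega) hp
      simpa using h1

section Determinant

variable {K : Type*} [Field K]

/-- Subtracting consecutive rows of a Vandermonde matrix removes its column of ones. -/
theorem det_vandermonde_eq_det_sub {s : ℕ} (v : Fin (s + 2) → K) :
    (Matrix.vandermonde v).det = (-1) ^ (s + 1) *
      (Matrix.of fun i k : Fin (s + 1) =>
        v i.castSucc ^ ((k : ℕ) + 1) - v i.succ ^ ((k : ℕ) + 1)).det := by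
  rw [Matrix.det_eq_of_forall_row_eq_smul_add_pred (B := Matrix.of fun i k : Fin (s + 2) =>
      (Fin.cons (v 0 ^ (k : ℕ)) (fun j : Fin (s + 1) =>
        v j.succ ^ (k : ℕ) - v j.castSucc ^ (k : ℕ)) : Fin (s + 2) → K) i) (fun _ => 1)]
  · rw [Matrix.det_succ_column_zero, Fin.sum_univ_succ]
    simp only [Matrix.of_apply, Fin.cons_zero, Fin.cons_succ, Fin.val_zero, pow_zero, sub_self,
      mul_zero, zero_mul, Finset.sum_const_zero, add_zero, one_mul]
    have hneg := Matrix.det_neg (Matrix.of fun i k : Fin (s + 1) =>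
        v i.castSucc ^ ((k : ℕ) + 1) - v i.succ ^ ((k : ℕ) + 1))
    rw [Fintype.card_fin] at hneg
    rw [← hneg]
    congr 1
    ext i k
    simp
  · intro j
    simp [Matrix.vandermonde_apply]
  · intro i j
    simp [Matrix.vandermonde_apply]

theorem sum_Icc_zpow {Q : K} (hQ0 : Q ≠ 0) (hQ1 : Q ≠ 1) {lo hi : ℕ} (hle : lo ≤ hi + 1)
    (e : ℤ) :
    ∑ m ∈ Finset.Icc lo hi, Q ^ ((m : ℤ) + e) =
      -(Q⁻¹ - 1)⁻¹ * (Q ^ ((hi : ℤ) + e) - Q ^ ((lo : ℤ) - 1 + e)) := by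
  have h1 : Finset.Icc lo hi = Finset.Ico lo (hi + 1) := by ext; simp
  have h2 : Q - 1 ≠ 0 := sub_ne_zero.2 hQ1
  have h3 : Q⁻¹ - 1 ≠ 0 := by
    rw [sub_ne_zero]
    simpa using hQ1
  simp_rw [zpow_add₀ hQ0, zpow_sub₀ hQ0, zpow_natCast, zpow_one]
  rw [← Finset.sum_mul, h1, geom_sum_Ico hQ1 hle, pow_succ]
  have h4 : -(Q⁻¹ - 1)⁻¹ = Q / (Q - 1) := by
    rw [neg_eq_iff_eq_neg, inv_eq_iff_eq_inv, ← neg_inv, inv_div]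
    field_simp
    ring
  rw [h4]
  field_simp

theorem sum_sub_two_mul_val (s : ℕ) : ∑ i : Fin (s + 1), ((s : ℤ) - 2 * i) = 0 := by
  rw [Finset.sum_sub_distrib, ← Finset.mul_sum, Fin.sum_univ_eq_sum_range (fun i => (i : ℤ))]
  have h := Finset.sum_range_id_mul_two (s + 1)
  rw [Nat.add_sub_cancel] at h
  apply_fun ((↑) : ℕ → ℤ) at h
  push_cast at h
  simp only [Finset.sum_const, Finset.card_univ, Fintype.card_fin, nsmul_eq_mul]
  push_cast
  linarith

/-- The Vandermonde determinant attached to the column heights `h` over the slice `a + b = s`. -/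
noncomputable def sliceDet (q : K) (s : ℕ) (h : Fin (s + 1) → ℕ) : K :=
  (Matrix.vandermonde fun i => q ^ ((h i : ℤ) + (s - 2 * (i : ℕ)))).det

theorem sum_sliceDet {q : K} (hq0 : q ≠ 0) (hq1 : ∀ k : ℕ, q ^ (k + 1) ≠ 1) {s : ℕ}
    {h : Fin (s + 2) → ℕ} (hh : ∀ i : Fin (s + 1), h i.succ ≤ h i.castSucc + 1) :
    (∑ m ∈ Fintype.piFinset fun i : Fin (s + 1) => Finset.Icc (h i.succ) (h i.castSucc + 1),
      q ^ (∑ i, m i) * sliceDet q s m) * ∏ k ∈ Finset.range (s + 1), ((q ^ (k + 1))⁻¹ - 1) =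
      sliceDet q (s + 1) h := by
  have hne : ∀ k : ℕ, (q ^ (k + 1))⁻¹ - 1 ≠ 0 := by
    intro k
    rw [sub_ne_zero]
    simpa using hq1 k
  have hterm : ∀ m : Fin (s + 1) → ℕ, q ^ (∑ i, m i) * sliceDet q s m =
      (Matrix.of fun i k : Fin (s + 1) =>
        (q ^ ((k : ℕ) + 1)) ^ ((m i : ℤ) + (s - 2 * (i : ℕ)))).det := by
    intro m
    have hprod : q ^ (∑ i, m i) = ∏ i : Fin (s + 1), q ^ ((m i : ℤ) + (s - 2 * (i : ℕ))) := by
      simp_rw [zpow_add₀ hq0]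
      rw [Finset.prod_mul_distrib, ← Finset.prod_pow_eq_pow_sum]
      have h0 : ∏ i : Fin (s + 1), q ^ ((s : ℤ) - 2 * (i : ℕ)) = 1 := by
        rw [← zpow_zero q, ← sum_sub_two_mul_val s]
        generalize (Finset.univ : Finset (Fin (s + 1))) = t
        induction t using Finset.induction_on with
        | empty => simp
        | insert a t ha ih => rw [Finset.prod_insert ha, Finset.sum_insert ha, zpow_add₀ hq0, ih]
      rw [h0, mul_one]
      simp
    rw [hprod, sliceDet, ← Matrix.det_mul_column]
    congr 1
    ext i k
    simp only [Matrix.of_apply, Matrix.vandermonde_apply]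
    rw [← pow_succ', ← zpow_natCast, ← zpow_natCast, ← zpow_mul, ← zpow_mul, mul_comm]
  have hsum : ∑ m ∈ Fintype.piFinset fun i : Fin (s + 1) =>
      Finset.Icc (h i.succ) (h i.castSucc + 1), q ^ (∑ i, m i) * sliceDet q s m =
      (Matrix.of fun i k : Fin (s + 1) => ∑ m ∈ Finset.Icc (h i.succ) (h i.castSucc + 1),
        (q ^ ((k : ℕ) + 1)) ^ ((m : ℤ) + (s - 2 * (i : ℕ)))).det := by
    simp_rw [hterm]
    have := (Matrix.detRowAlternating (n := Fin (s + 1)) (R := K)).toMultilinearMap.map_sum_finset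
      (fun (i : Fin (s + 1)) (m : ℕ) (k : Fin (s + 1)) =>
        (q ^ ((k : ℕ) + 1)) ^ ((m : ℤ) + (s - 2 * (i : ℕ))))
      (fun i => Finset.Icc (h i.succ) (h i.castSucc + 1))
    refine this.symm.trans ?_
    change Matrix.det _ = _
    congr 1
    ext i k
    simp [Finset.sum_apply]
  have hentry : ∀ i k : Fin (s + 1), ∑ m ∈ Finset.Icc (h i.succ) (h i.castSucc + 1),
        (q ^ ((k : ℕ) + 1)) ^ ((m : ℤ) + (s - 2 * (i : ℕ))) =
      -((q ^ ((k : ℕ) + 1))⁻¹ - 1)⁻¹ *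
        ((q ^ ((h i.castSucc : ℤ) + ((s + 1 : ℕ) - 2 * (i.castSucc : ℕ)))) ^ ((k : ℕ) + 1) -
          (q ^ ((h i.succ : ℤ) + ((s + 1 : ℕ) - 2 * (i.succ : ℕ)))) ^ ((k : ℕ) + 1)) := by
    intro i k
    rw [sum_Icc_zpow (pow_ne_zero _ hq0) (hq1 k) (by have := hh i; omega)]
    simp only [← zpow_natCast, ← zpow_mul, Fin.val_castSucc, Fin.val_succ]
    congr 3 <;> push_cast <;> ring
  rw [hsum]
  simp_rw [hentry]
  rw [Matrix.det_mul_row (fun k : Fin (s + 1) => -((q ^ ((k : ℕ) + 1))⁻¹ - 1)⁻¹)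
    (fun i k : Fin (s + 1) =>
      (q ^ ((h i.castSucc : ℤ) + ((s + 1 : ℕ) - 2 * (i.castSucc : ℕ)))) ^ ((k : ℕ) + 1) -
          (q ^ ((h i.succ : ℤ) + ((s + 1 : ℕ) - 2 * (i.succ : ℕ)))) ^ ((k : ℕ) + 1)),
    sliceDet, det_vandermonde_eq_det_sub, Finset.prod_neg, Finset.card_univ, Fintype.card_fin,
    Finset.prod_inv_distrib,
    Fin.prod_univ_eq_prod_range (fun k => (q ^ (k + 1))⁻¹ - 1) (s + 1)]
  have hP : ∏ k ∈ Finset.range (s + 1), ((q ^ (k + 1))⁻¹ - 1) ≠ 0 :=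
    Finset.prod_ne_zero_iff.2 fun k _ => hne k
  rw [mul_right_comm, mul_assoc ((-1 : K) ^ (s + 1)), inv_mul_cancel₀ hP, mul_one]
  rfl

theorem sum_sliceIdeals_mul {q : K} (hq0 : q ≠ 0) (hq1 : ∀ k : ℕ, q ^ (k + 1) ≠ 1) (n s : ℕ)
    (h : Fin (s + 1) → ℕ) (hn : ∀ i, h i + s + 1 ≤ n)
    (hh : ∀ i : Fin s, h i.succ ≤ h i.castSucc + 1) :
    (∑ I ∈ sliceIdeals n s h, q ^ I.card) *
      ∏ t ∈ Finset.range s, ∏ k ∈ Finset.range (t + 1), ((q ^ (k + 1))⁻¹ - 1) =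
      sliceDet q s h := by
  induction s with
  | zero => simp [sliceIdeals_zero, sliceDet]
  | succ s ih =>
    rw [sum_sliceIdeals_succ q hn, Finset.prod_range_succ, ← mul_assoc, Finset.sum_mul,
      ← sum_sliceDet hq0 hq1 hh]
    congr 1
    refine Finset.sum_congr rfl fun m hm => ?_
    simp only [Fintype.mem_piFinset, Finset.mem_Icc] at hm
    rw [mul_assoc, ih m]
    · intro i
      have := hm i
      have := hn i.castSucc
      omega
    · intro i
      have h1 := hm i.castSucc
      have h2 := hm i.succ
      rw [Fin.succ_castSucc] at h1
      omega

/-- The Vandermonde determinant of a geometric progression of ratio `r ^ 2`. -/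
theorem det_vandermonde_geometric {q r : K} (hqr : q * r = 1) (n : ℕ) (x : K) :
    (Matrix.vandermonde fun i : Fin (n + 1) => x * r ^ (2 * (i : ℕ))).det =
      (x * r ^ n) ^ ((n + 1).choose 2) *
        ((∏ t ∈ Finset.range n, ∏ k ∈ Finset.range (t + 1), (r ^ (k + 1) - 1)) *
          ∏ t ∈ Finset.range n, ∏ k ∈ Finset.range (t + 1), (1 + q ^ (k + 1))) := by
  induction n generalizing x with
  | zero => simp
  | succ n ih =>
    have hfac : ∀ k : ℕ, x * r ^ (2 * (k + 1)) - x =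
        x * r ^ (k + 1) * ((r ^ (k + 1) - 1) * (1 + q ^ (k + 1))) := by
      intro k
      have hk : r ^ (k + 1) * q ^ (k + 1) = 1 := by rw [← mul_pow, mul_comm, hqr, one_pow]
      linear_combination (x - x * r ^ (k + 1)) * hk
    have hih := ih (x * r ^ 2)
    rw [Matrix.det_vandermonde] at hih ⊢
    rw [Fin.prod_univ_succ, Fin.prod_Ioi_zero]
    simp_rw [Fin.prod_Ioi_succ]
    have hsucc : ∀ i : Fin (n + 1), x * r ^ (2 * (i.succ : ℕ)) =
        x * r ^ 2 * r ^ (2 * (i : ℕ)) := by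
      intro i
      rw [Fin.val_succ]
      ring
    simp_rw [hsucc]
    rw [hih,
      Finset.prod_range_succ (fun t => ∏ k ∈ Finset.range (t + 1), (r ^ (k + 1) - 1)) n,
      Finset.prod_range_succ (fun t => ∏ k ∈ Finset.range (t + 1), (1 + q ^ (k + 1))) n]
    have hfirst : ∏ j : Fin (n + 1), (x * r ^ 2 * r ^ (2 * (j : ℕ)) -
        x * r ^ (2 * ((0 : Fin (n + 2)) : ℕ))) = x ^ (n + 1) * r ^ ((n + 2).choose 2) *
        ((∏ k ∈ Finset.range (n + 1), (r ^ (k + 1) - 1)) *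
          ∏ k ∈ Finset.range (n + 1), (1 + q ^ (k + 1))) := by
      have hr : ∏ k ∈ Finset.range (n + 1), r ^ (k + 1) = r ^ ((n + 2).choose 2) := by
        rw [Finset.prod_pow_eq_pow_sum, Nat.choose_two_right, ← Finset.sum_range_id,
          Finset.sum_range_succ' _ (n + 1), add_zero]
      rw [← hr, ← Finset.prod_mul_distrib, Fin.prod_univ_eq_prod_range
        (fun j => x * r ^ 2 * r ^ (2 * j) - x * r ^ (2 * ((0 : Fin (n + 2)) : ℕ))),
        ← Finset.card_range (n + 1), ← Finset.prod_const, Finset.card_range,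
        ← Finset.prod_mul_distrib, ← Finset.prod_mul_distrib]
      refine Finset.prod_congr rfl fun k _ => ?_
      rw [← hfac k]
      simp only [Fin.val_zero, mul_zero, pow_zero, mul_one]
      ring
    rw [hfirst]
    have hexp : (n + 2).choose 2 = (n + 1).choose 2 + (n + 1) := by
      rw [Nat.choose_succ_succ' (n + 1) 1, Nat.choose_one_right]
      ring
    have hmul : (n + 1).choose 2 * 2 = (n + 1) * n := by
      rw [Nat.choose_two_right, Nat.div_mul_cancel (Nat.even_mul_pred_self _).two_dvd]
      rfl
    have hpow : x ^ (n + 1) * r ^ ((n + 2).choose 2) * (x * r ^ 2 * r ^ n) ^ ((n + 1).choose 2) =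
        (x * r ^ (n + 1)) ^ ((n + 2).choose 2) := by
      rw [hexp]
      have e1 : (x * r ^ 2 * r ^ n) ^ ((n + 1).choose 2) = x ^ ((n + 1).choose 2) *
          r ^ ((n + 2) * (n + 1).choose 2) := by
        rw [mul_assoc, ← pow_add, mul_pow, ← pow_mul, add_comm 2 n]
      have e2 : (x * r ^ (n + 1)) ^ ((n + 1).choose 2 + (n + 1)) =
          x ^ ((n + 1).choose 2 + (n + 1)) * r ^ ((n + 1) * ((n + 1).choose 2 + (n + 1))) := by
        rw [mul_pow, ← pow_mul]
      have e3 : (n + 1) * ((n + 1).choose 2 + (n + 1)) =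
          ((n + 1).choose 2 + (n + 1)) + (n + 2) * (n + 1).choose 2 := by
        nlinarith
      rw [e1, e2, e3, pow_add x, pow_add r]
      ring
    rw [← hpow]
    ring

theorem sum_ideals3_eq_prod {q : K} (hq0 : q ≠ 0) (hq1 : ∀ k : ℕ, q ^ (k + 1) ≠ 1) (N : ℕ) :
    ∑ I ∈ ideals3 {vg, vy, vo} (V3 (N + 1)), q ^ I.card =
      ∏ t ∈ Finset.range N, ∏ k ∈ Finset.range (t + 1), (1 + q ^ (k + 1)) := by
  have h1 := sum_sliceIdeals_mul hq0 hq1 (N + 1) N (fun _ => 0) (by simp) (by simp)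
  rw [← ideals3_eq_sliceIdeals, sliceDet] at h1
  have h2 := det_vandermonde_geometric (mul_inv_cancel₀ hq0) N (q ^ N)
  have hv : (fun i : Fin (N + 1) => q ^ (((0 : ℕ) : ℤ) + ((N : ℤ) - 2 * (i : ℕ)))) =
      fun i : Fin (N + 1) => q ^ N * q⁻¹ ^ (2 * (i : ℕ)) := by
    funext i
    rw [Nat.cast_zero, zero_add, zpow_sub₀ hq0, zpow_natCast, inv_pow, div_eq_mul_inv]
    norm_cast
  rw [hv, h2, ← mul_pow, mul_inv_cancel₀ hq0, one_pow, one_pow, one_mul, mul_comm] at h1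
  simp_rw [inv_pow] at h1
  refine mul_left_cancel₀ ?_ h1
  refine Finset.prod_ne_zero_iff.2 fun t _ => Finset.prod_ne_zero_iff.2 fun k _ => ?_
  rw [sub_ne_zero]
  simpa using hq1 k

end Determinant

theorem prod_Icc_pow_eq_prod_range {M : Type*} [CommMonoid M] (f : ℕ → M) (N : ℕ) :
    ∏ j ∈ Finset.Icc 1 N, f j ^ (N + 1 - j) =
      ∏ t ∈ Finset.range N, ∏ k ∈ Finset.range (t + 1), f (k + 1) := by
  induction N with
  | zero => simp
  | succ N ih =>
    have hIcc : ∏ k ∈ Finset.range (N + 1), f (k + 1) = ∏ j ∈ Finset.Icc 1 (N + 1), f j := by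
      rw [Finset.range_eq_Ico, Finset.prod_Ico_add' f 0 (N + 1) 1]
      rfl
    rw [Finset.prod_range_succ, ← ih, hIcc, Finset.prod_Icc_succ_top (by omega),
      Finset.prod_Icc_succ_top (by omega), ← mul_assoc, ← Finset.prod_mul_distrib]
    congr 1
    · refine Finset.prod_congr rfl fun j hj => ?_
      rw [Finset.mem_Icc] at hj
      rw [← pow_succ]
      congr 1
      omega
    · rw [Nat.add_sub_cancel_left, pow_one]

theorem genF3_gyo (N : ℕ) :
    genF3 {vg, vy, vo} (V3 (N + 1)) =
      ∏ t ∈ Finset.range N, ∏ k ∈ Finset.range (t + 1),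
        (1 + (Polynomial.X : Polynomial ℤ) ^ (k + 1)) := by
  have hinj := IsFractionRing.injective (Polynomial ℤ) (FractionRing (Polynomial ℤ))
  apply hinj
  have hq0 : algebraMap (Polynomial ℤ) (FractionRing (Polynomial ℤ)) Polynomial.X ≠ 0 := by
    rw [Ne, map_eq_zero_iff _ hinj]
    exact Polynomial.X_ne_zero
  have hq1 : ∀ k : ℕ,
      algebraMap (Polynomial ℤ) (FractionRing (Polynomial ℤ)) Polynomial.X ^ (k + 1) ≠ 1 := by
    intro k hk
    rw [← map_pow, ← map_one (algebraMap (Polynomial ℤ) (FractionRing (Polynomial ℤ)))] at hk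
    have hdeg := congrArg Polynomial.natDegree (hinj hk)
    simp at hdeg
  have h := sum_ideals3_eq_prod hq0 hq1 N
  simpa [genF3, map_sum, map_prod] using h

/-- The rank generating function of `J(T_n({g,y,o}))` is
`∏_{j=1}^{n-1} (1+q^j)^{n-j}`; in particular the number of order ideals is
`2^(binomial(n,2))`. -/
theorem stmt9 (n : ℕ) (hn : 1 ≤ n) :
    genF3 {vg, vy, vo} (V3 n) =
      (∏ j ∈ Finset.Icc 1 (n - 1), (1 + Polynomial.X ^ j) ^ (n - j)) ∧
    (ideals3 {vg, vy, vo} (V3 n)).card = 2 ^ (n.choose 2) := by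
  obtain ⟨N, rfl⟩ : ∃ N, n = N + 1 := ⟨n - 1, by omega⟩
  have hF := genF3_gyo N
  rw [Nat.add_sub_cancel, prod_Icc_pow_eq_prod_range (fun j => 1 + Polynomial.X ^ j) N]
  refine ⟨hF, ?_⟩
  have h1 := congrArg (Polynomial.eval 1) hF
  simp only [genF3, Polynomial.eval_finsetSum, Polynomial.eval_prod, Polynomial.eval_pow,
    Polynomial.eval_X, Polynomial.eval_add, Polynomial.eval_one, one_pow, Finset.sum_const,
    Finset.prod_const, Finset.card_range, nsmul_eq_mul, mul_one] at h1
  rw [Finset.prod_pow_eq_pow_sum] at h1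
  have hexp : ∑ t ∈ Finset.range N, (t + 1) = (N + 1).choose 2 := by
    rw [Nat.choose_two_right, ← Finset.sum_range_id, Finset.sum_range_succ' _ N, add_zero]
  rw [hexp, one_add_one_eq_two] at h1
  exact_mod_cast h1
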